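/- Let x > 0 be real, set q = e^{−π/x} and α = 1 − φ⁴(−q⁸)/φ⁴(q⁸). Then F_{(4,1)}(x) = −(π/(√2 · x)) · log( (1 − α^{1/8}) / (1 + α^{1/8}) ), where α ∈ (0,1) and α^{1/8} denotes the positive real eighth root. -/

import Mathlib

open Filter

/-- Ramanujan's theta function `φ(q) = ∑_{n ∈ ℤ} q^{n²}`. -/
noncomputable def phi (q : ℝ) : ℝ := ∑' n : ℤ, q ^ (n ^ 2)

/-!
The partial fraction expansion of the cosecant turns the sum over `m` into
`(2π/x) (-1)ⁿ ∑ⱼ q^{(2j+1)|4n+1|} / |4n+1|`. The resulting double series converges absolutely, and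
summing over `n` first gives `(2π/x) ∑ⱼ -(1/√2) log ‖(1 - ζ q^{2j+1}) / (1 + ζ q^{2j+1})‖` with
`ζ = e^{iπ/4}`, because `Re ζ^{|4n+1|} = (-1)ⁿ/√2` and the exponents `|4n+1|` run over the odd
numbers. Write `θ(z; q) = ∑ zⁿ q^{n²}`. By the Jacobi triple product the sum of these logarithms is
half the logarithm of `θ(ζ; -q) / θ(ζ; q)`. Splitting `θ(ζ; q)` according to residues modulo four,
and multiplying theta series by the rotation `(m, n) ↦ (m + n, m - n)`, shows that the eighth power
of `(θ(ζ; q) - θ(ζ; -q)) / (θ(ζ; q) + θ(ζ; -q))` is `1 - φ(-q⁸)⁴ / φ(q⁸)⁴`.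
-/

section Series

lemma norm_pow_lt_one_of_norm_lt_one {R : Type*} [NormedRing R] [NormOneClass R] {a : R}
    (ha : ‖a‖ < 1) {n : ℕ} (hn : n ≠ 0) : ‖a ^ n‖ < 1 :=
  (norm_pow_le a n).trans_lt (pow_lt_one₀ (norm_nonneg a) ha hn)

lemma hasSum_add_of_isCompl_range {α β γ M : Type*} [AddCommMonoid M] [TopologicalSpace M]
    [ContinuousAdd M] {f : γ → M} {i : α → γ} {j : β → γ} {a b : M} (hi : i.Injective)
    (hj : j.Injective) (hij : IsCompl (Set.range i) (Set.range j)) (ha : HasSum (f ∘ i) a)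
    (hb : HasSum (f ∘ j) b) : HasSum f (a + b) :=
  (hi.hasSum_range_iff.mpr ha).add_isCompl hij (hj.hasSum_range_iff.mpr hb)

lemma hasSum_int_even_add_odd {M : Type*} [AddCommMonoid M] [TopologicalSpace M] [ContinuousAdd M]
    {f : ℤ → M} {a b : M} (h_even : HasSum (fun n ↦ f (2 * n)) a)
    (h_odd : HasSum (fun n ↦ f (2 * n + 1)) b) : HasSum f (a + b) := by
  refine hasSum_add_of_isCompl_range (i := fun n : ℤ ↦ 2 * n) (j := fun n : ℤ ↦ 2 * n + 1)
    (fun m n h ↦ by simpa using h) (fun m n h ↦ by simpa using h) ?_ h_even h_odd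
  rw [range_two_mul ℤ, range_two_mul_add_one ℤ]
  exact Int.isCompl_even_odd

lemma isCompl_range_add_sub_range_add_add_one_sub :
    IsCompl (Set.range fun n : ℤ × ℤ ↦ (n.1 + n.2, n.1 - n.2))
      (Set.range fun n : ℤ × ℤ ↦ (n.1 + n.2 + 1, n.1 - n.2)) := by
  refine isCompl_iff.mpr ⟨Set.disjoint_left.mpr ?_, codisjoint_iff.mpr ?_⟩
  · rintro _ ⟨⟨a, b⟩, rfl⟩ ⟨⟨c, d⟩, h⟩
    simp only [Prod.mk.injEq] at h
    omega
  · refine Set.eq_univ_of_forall fun ⟨m, n⟩ ↦ ?_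
    rcases Int.even_or_odd' (m + n) with ⟨k, hk | hk⟩
    · exact .inl ⟨(k, m - k), Prod.ext (by simp) (by simp only; omega)⟩
    · exact .inr ⟨(k, m - k - 1), Prod.ext (by simp only; omega) (by simp only; omega)⟩

lemma hasSum_int_prod_of_add_sub {M : Type*} [AddCommMonoid M] [TopologicalSpace M]
    [ContinuousAdd M] {f : ℤ × ℤ → M} {a b : M}
    (ha : HasSum (fun n : ℤ × ℤ ↦ f (n.1 + n.2, n.1 - n.2)) a)
    (hb : HasSum (fun n : ℤ × ℤ ↦ f (n.1 + n.2 + 1, n.1 - n.2)) b) : HasSum f (a + b) := by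
  refine hasSum_add_of_isCompl_range ?_ ?_ isCompl_range_add_sub_range_add_add_one_sub ha hb <;>
  · intro m n h
    simp only [Prod.mk.injEq] at h
    exact Prod.ext (by omega) (by omega)

lemma hasSum_neg_one_zpow_mul {f : ℤ → ℂ} {a b : ℂ} (hf : HasSum f a)
    (h_even : HasSum (fun n ↦ f (2 * n)) b) : HasSum (fun n ↦ (-1) ^ n * f n) (2 * b - a) := by
  have vanish_off_even : ∀ n ∉ Set.range (fun n : ℤ ↦ 2 * n), f n + (-1) ^ n * f n = 0 := by
    intro n hn
    rw [range_two_mul ℤ, Set.mem_ofPred_eq, Int.not_even_iff_odd] at hn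
    rw [hn.neg_one_zpow]
    ring
  have doubled_even : HasSum (fun n ↦ f n + (-1) ^ n * f n) (2 * b) := by
    refine ((mul_right_injective₀ two_ne_zero).hasSum_iff vanish_off_even).mp ?_
    refine (h_even.mul_left 2).congr_fun fun n ↦ ?_
    simp only [Function.comp_apply, (even_two_mul n).neg_one_zpow]
    ring
  exact (doubled_even.sub hf).congr_fun fun n ↦ by ring

end Series

/-- The Jacobi theta function `∑ zⁿ q^{n²}` in multiplicative variables. -/
noncomputable def theta (z q : ℂ) : ℂ := ∑' n : ℤ, z ^ n * q ^ (n ^ 2)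

section Theta

open Complex

variable {q z w ζ : ℂ}

lemma summable_theta (hz : z ≠ 0) (hq₀ : q ≠ 0) (hq : ‖q‖ < 1) :
    Summable fun n : ℤ ↦ z ^ n * q ^ (n ^ 2) := by
  have im_tau_pos : 0 < (log q / (Real.pi * I)).im := by
    have : (log q / (Real.pi * I)).im = -Real.log ‖q‖ / Real.pi := by
      rw [← log_re, mul_comm, ← div_div, div_ofReal_im, div_I]
      simp
    rw [this]
    exact div_pos (neg_pos.mpr (Real.log_neg (norm_pos_iff.mpr hq₀) hq)) Real.pi_pos
  refine ((summable_jacobiTheta₂_term_iff (log z / (2 * Real.pi * I)) _).mpr im_tau_pos).congr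
    fun n ↦ ?_
  have hpi : (Real.pi : ℂ) ≠ 0 := ofReal_ne_zero.mpr Real.pi_ne_zero
  have exponent : 2 * Real.pi * I * n * (log z / (2 * Real.pi * I)) +
      Real.pi * I * n ^ 2 * (log q / (Real.pi * I)) = n * log z + (n ^ 2 : ℤ) * log q := by
    push_cast
    field_simp
  rw [jacobiTheta₂_term, exponent, exp_add, exp_int_mul, exp_int_mul, exp_log hz, exp_log hq₀]

lemma hasSum_theta (hz : z ≠ 0) (hq₀ : q ≠ 0) (hq : ‖q‖ < 1) :
    HasSum (fun n : ℤ ↦ z ^ n * q ^ (n ^ 2)) (theta z q) :=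
  (summable_theta hz hq₀ hq).hasSum

lemma theta_inv (z q : ℂ) : theta z⁻¹ q = theta z q := by
  rw [theta, ← (Equiv.neg ℤ).tsum_eq]
  simp [theta]

lemma theta_neg_right (z q : ℂ) : theta z (-q) = theta (-z) q := by
  refine tsum_congr fun n ↦ ?_
  rcases Int.even_or_odd n with hn | hn
  · rw [hn.neg_zpow, (hn.pow_of_ne_zero two_ne_zero).neg_zpow]
  · rw [hn.neg_zpow, hn.pow.neg_zpow, mul_neg, neg_mul]

lemma theta_sq_mul (hz : z ≠ 0) (hq₀ : q ≠ 0) : q * z * theta (q ^ 2 * z) q = theta z q := by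
  rw [theta, theta, ← tsum_mul_left, ← (Equiv.addRight (1 : ℤ)).tsum_eq fun n ↦ z ^ n * q ^ (n ^ 2)]
  refine tsum_congr fun n ↦ ?_
  have q_pow : q ^ ((n + 1) ^ 2) = q * (q ^ 2) ^ n * q ^ (n ^ 2) := by
    rw [← zpow_natCast q 2, ← zpow_mul, ← zpow_one_add₀ hq₀, ← zpow_add₀ hq₀]
    congr 1
    push_cast
    ring
  rw [Equiv.coe_addRight, q_pow, zpow_add_one₀ hz, mul_zpow]
  ring

lemma theta_neg_self (hq₀ : q ≠ 0) : theta (-q) q = 0 := by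
  have h := theta_sq_mul (z := (-q)⁻¹) (inv_ne_zero (neg_ne_zero.mpr hq₀)) hq₀
  rw [theta_inv, show q ^ 2 * (-q)⁻¹ = -q by field_simp, show q * (-q)⁻¹ = -1 by field_simp] at h
  linear_combination -h / 2

lemma theta_eq_even_add_odd (hz : z ≠ 0) (hq₀ : q ≠ 0) (hq : ‖q‖ < 1) :
    theta z q = theta (z ^ 2) (q ^ 4) + z * q * theta (q ^ 4 * z ^ 2) (q ^ 4) := by
  have hq₄ : ‖q ^ 4‖ < 1 := norm_pow_lt_one_of_norm_lt_one hq four_ne_zero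
  have hz₂ := pow_ne_zero 2 hz
  have hq₄₀ := pow_ne_zero 4 hq₀
  have q_pow (n : ℤ) : (q ^ 4) ^ n = q ^ (4 * n) := by rw [zpow_mul]; rfl
  have z_pow (n : ℤ) : (z ^ 2) ^ n = z ^ (2 * n) := by rw [zpow_mul]; rfl
  refine (hasSum_int_even_add_odd ?_ ?_).tsum_eq
  · refine (hasSum_theta hz₂ hq₄₀ hq₄).congr_fun fun n ↦ ?_
    rw [q_pow, z_pow]
    ring_nf
  · refine ((hasSum_theta (mul_ne_zero hq₄₀ hz₂) hq₄₀ hq₄).mul_left _).congr_fun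
      fun n ↦ ?_
    rw [mul_zpow, q_pow, q_pow, z_pow, zpow_add_one₀ hz,
      show (2 * n + 1) ^ 2 = 4 * n + 4 * n ^ 2 + 1 by ring, zpow_add_one₀ hq₀, zpow_add₀ hq₀]
    ring

lemma hasSum_theta_mul_theta (hz : z ≠ 0) (hw : w ≠ 0) (hq₀ : q ≠ 0) (hq : ‖q‖ < 1) :
    HasSum (fun n : ℤ × ℤ ↦ z ^ n.1 * q ^ (n.1 ^ 2) * (w ^ n.2 * q ^ (n.2 ^ 2)))
      (theta z q * theta w q) := by
  have summable_prod := summable_mul_of_summable_norm (summable_theta hz hq₀ hq).norm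
    (summable_theta hw hq₀ hq).norm
  have hasSum_prod := (hasSum_theta hz hq₀ hq).mul (hasSum_theta hw hq₀ hq) summable_prod
  exact hasSum_prod

lemma theta_mul_theta (hz : z ≠ 0) (hw : w ≠ 0) (hq₀ : q ≠ 0) (hq : ‖q‖ < 1) :
    theta z q * theta w q = theta (z * w) (q ^ 2) * theta (z / w) (q ^ 2) +
      q * z * (theta (q ^ 2 * (z * w)) (q ^ 2) * theta (q ^ 2 * (z / w)) (q ^ 2)) := by
  have hq₂ : ‖q ^ 2‖ < 1 := norm_pow_lt_one_of_norm_lt_one hq two_ne_zero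
  have hq₂₀ := pow_ne_zero 2 hq₀
  have q_pow (n : ℤ) : (q ^ 2) ^ n = q ^ (2 * n) := by rw [zpow_mul]; rfl
  have zw_pow (m n : ℤ) : z ^ (m + n) * w ^ (m - n) = (z * w) ^ m * (z / w) ^ n := by
    rw [zpow_add₀ hz, zpow_sub₀ hw, mul_zpow, div_zpow]
    ring
  refine (hasSum_theta_mul_theta hz hw hq₀ hq).unique
    (hasSum_int_prod_of_add_sub
      (f := fun n ↦ z ^ n.1 * q ^ (n.1 ^ 2) * (w ^ n.2 * q ^ (n.2 ^ 2))) ?_ ?_)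
  · refine (hasSum_theta_mul_theta (mul_ne_zero hz hw) (div_ne_zero hz hw) hq₂₀ hq₂).congr_fun
      fun n ↦ ?_
    have exponent : q ^ ((n.1 + n.2) ^ 2) * q ^ ((n.1 - n.2) ^ 2) =
        (q ^ 2) ^ (n.1 ^ 2) * (q ^ 2) ^ (n.2 ^ 2) := by
      rw [q_pow, q_pow, ← zpow_add₀ hq₀, ← zpow_add₀ hq₀]
      ring_nf
    rw [mul_mul_mul_comm, zw_pow, exponent]
    ring
  · refine ((hasSum_theta_mul_theta (mul_ne_zero hq₂₀ (mul_ne_zero hz hw))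
      (mul_ne_zero hq₂₀ (div_ne_zero hz hw)) hq₂₀ hq₂).mul_left (q * z)).congr_fun fun n ↦ ?_
    have exponent : q ^ ((n.1 + n.2 + 1) ^ 2) * q ^ ((n.1 - n.2) ^ 2) =
        q * ((q ^ 2) ^ n.1 * (q ^ 2) ^ n.2 * ((q ^ 2) ^ (n.1 ^ 2) * (q ^ 2) ^ (n.2 ^ 2))) := by
      simp only [q_pow, ← zpow_add₀ hq₀, ← zpow_one_add₀ hq₀]
      ring_nf
    rw [mul_mul_mul_comm, zpow_add_one₀ hz, mul_right_comm (z ^ _), zw_pow, exponent,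
      mul_zpow (q ^ 2), mul_zpow (q ^ 2)]
    ring

lemma theta_one_mul_theta_neg_one (hq₀ : q ≠ 0) (hq : ‖q‖ < 1) :
    theta 1 q * theta (-1) q = theta (-1) (q ^ 2) ^ 2 := by
  rw [theta_mul_theta one_ne_zero (neg_ne_zero.mpr one_ne_zero) hq₀ hq, one_mul, one_div,
    inv_neg_one, mul_neg_one, theta_neg_self (pow_ne_zero 2 hq₀)]
  ring

lemma theta_sq_of_sq_eq_one (hz : z ^ 2 = 1) (hq₀ : q ≠ 0) (hq : ‖q‖ < 1) :
    theta z q ^ 2 = theta 1 (q ^ 2) ^ 2 + q * z * theta (q ^ 2) (q ^ 2) ^ 2 := by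
  have hz₀ : z ≠ 0 := fun h ↦ by simp [h] at hz
  rw [sq, theta_mul_theta hz₀ hz₀ hq₀ hq, ← sq z, hz, div_self hz₀, mul_one]
  ring

lemma theta_self_sq (hq₀ : q ≠ 0) (hq : ‖q‖ < 1) :
    theta q q ^ 2 = 2 * theta 1 (q ^ 2) * theta (q ^ 2) (q ^ 2) := by
  have h := theta_sq_mul one_ne_zero (pow_ne_zero 2 hq₀)
  rw [mul_one, mul_one, sq (q ^ 2)] at h
  rw [sq, theta_mul_theta hq₀ hq₀ hq₀ hq, div_self hq₀, mul_one, ← sq q]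
  linear_combination theta (q ^ 2) (q ^ 2) * h

lemma theta_one_pow_four_sub_theta_neg_one_pow_four (hq₀ : q ≠ 0) (hq : ‖q‖ < 1) :
    theta 1 q ^ 4 - theta (-1) q ^ 4 = q * theta q q ^ 4 := by
  have h_one := theta_sq_of_sq_eq_one (one_pow 2) hq₀ hq
  have h_neg_one := theta_sq_of_sq_eq_one (z := -1) (by norm_num) hq₀ hq
  calc theta 1 q ^ 4 - theta (-1) q ^ 4
      = (theta 1 q ^ 2) ^ 2 - (theta (-1) q ^ 2) ^ 2 := by ring
    _ = q * (2 * theta 1 (q ^ 2) * theta (q ^ 2) (q ^ 2)) ^ 2 := by rw [h_one, h_neg_one]; ring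
    _ = q * theta q q ^ 4 := by rw [← theta_self_sq hq₀ hq]; ring

lemma mul_theta_neg_pow_three (hq₀ : q ≠ 0) : q * theta (-q ^ 3) (q ^ 2) = -theta (-q) (q ^ 2) := by
  have h := theta_sq_mul (z := (-q)⁻¹) (inv_ne_zero (neg_ne_zero.mpr hq₀)) (pow_ne_zero 2 hq₀)
  rw [theta_inv, show (q ^ 2) ^ 2 * (-q)⁻¹ = -q ^ 3 by field_simp,
    show q ^ 2 * (-q)⁻¹ = -q by field_simp] at h
  linear_combination -h

lemma theta_self_mul_theta_neg_one (hq₀ : q ≠ 0) (hq : ‖q‖ < 1) :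
    theta q q * theta (-1) q = 2 * theta (-q) (q ^ 2) ^ 2 := by
  have h := mul_theta_neg_pow_three hq₀
  rw [theta_mul_theta hq₀ (neg_ne_zero.mpr one_ne_zero) hq₀ hq, mul_neg_one, div_neg, div_one,
    show q ^ 2 * -q = -q ^ 3 by ring]
  linear_combination (q * theta (-q ^ 3) (q ^ 2) - theta (-q) (q ^ 2)) * h

lemma one_sub_theta_quotient_pow_four (hq₀ : q ≠ 0) (hq : ‖q‖ < 1)
    (hθ : theta (-1) (q ^ 2) ≠ 0) :
    1 - theta (-1) q ^ 4 / theta 1 q ^ 4 =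
      16 * q * (theta (-q) (q ^ 2) / theta (-1) (q ^ 2)) ^ 8 := by
  have h_prod := theta_one_mul_theta_neg_one hq₀ hq
  have h_prod_ne : theta 1 q * theta (-1) q ≠ 0 := h_prod ▸ pow_ne_zero 2 hθ
  have h_one := left_ne_zero_of_mul h_prod_ne
  have h_neg_one := right_ne_zero_of_mul h_prod_ne
  have numerator : 16 * theta (-q) (q ^ 2) ^ 8 = theta q q ^ 4 * theta (-1) q ^ 4 := by
    rw [← mul_pow, theta_self_mul_theta_neg_one hq₀ hq]
    ring
  have denominator : theta (-1) (q ^ 2) ^ 8 = theta 1 q ^ 4 * theta (-1) q ^ 4 := by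
    rw [← mul_pow, h_prod]
    ring
  calc 1 - theta (-1) q ^ 4 / theta 1 q ^ 4
      = (theta 1 q ^ 4 - theta (-1) q ^ 4) / theta 1 q ^ 4 := by field_simp
    _ = q * (theta q q ^ 4 * theta (-1) q ^ 4) / (theta 1 q ^ 4 * theta (-1) q ^ 4) := by
      rw [theta_one_pow_four_sub_theta_neg_one_pow_four hq₀ hq]
      field_simp
    _ = 16 * q * (theta (-q) (q ^ 2) / theta (-1) (q ^ 2)) ^ 8 := by
      rw [← numerator, ← denominator]
      ring

lemma theta_of_pow_four_eq_neg_one (hζ : ζ ^ 4 = -1) (hq₀ : q ≠ 0) (hq : ‖q‖ < 1) :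
    theta ζ q =
      theta (-1) (q ^ 16) + (ζ + ζ⁻¹) * q * theta (-q ^ 8) (q ^ 16) := by
  have hζ₀ : ζ ≠ 0 := fun h ↦ by simp [h] at hζ
  have hq₄ : ‖q ^ 4‖ < 1 := norm_pow_lt_one_of_norm_lt_one hq four_ne_zero
  have even_part : theta (ζ ^ 2) (q ^ 4) = theta (-1) (q ^ 16) := by
    rw [theta_eq_even_add_odd (pow_ne_zero 2 hζ₀) (pow_ne_zero 4 hq₀) hq₄, ← pow_mul, ← pow_mul, hζ,
      mul_neg_one, theta_neg_self (pow_ne_zero 16 hq₀)]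
    ring
  have odd_part : theta (q ^ 4 * ζ ^ 2) (q ^ 4) = (1 - ζ ^ 2) * theta (-q ^ 8) (q ^ 16) := by
    have h := mul_theta_neg_pow_three (pow_ne_zero 8 hq₀)
    rw [theta_eq_even_add_odd (mul_ne_zero (pow_ne_zero 4 hq₀) (pow_ne_zero 2 hζ₀))
      (pow_ne_zero 4 hq₀) hq₄,
      show (q ^ 4 * ζ ^ 2) ^ 2 = -q ^ 8 by linear_combination q ^ 8 * hζ]
    ring_nf at h ⊢
    linear_combination ζ ^ 2 * h
  have hζ_inv : ζ⁻¹ = -ζ ^ 3 := by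
    refine inv_eq_of_mul_eq_one_left ?_
    linear_combination -hζ
  rw [theta_eq_even_add_odd hζ₀ hq₀ hq, even_part, odd_part, hζ_inv]
  ring

lemma theta_ratio_pow_eight (hζ : ζ ^ 4 = -1) (hq₀ : q ≠ 0) (hq : ‖q‖ < 1)
    (hθ : theta (-1) (q ^ 16) ≠ 0) :
    ((theta ζ q - theta ζ (-q)) / (theta ζ q + theta ζ (-q))) ^ 8 =
      1 - theta (-1) (q ^ 8) ^ 4 / theta 1 (q ^ 8) ^ 4 := by
  have hζ₀ : ζ ≠ 0 := fun h ↦ by simp [h] at hζ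
  have hq₈ : ‖q ^ 8‖ < 1 := norm_pow_lt_one_of_norm_lt_one hq (by norm_num)
  have hζ_add_inv : (ζ + ζ⁻¹) ^ 2 = 2 := by
    field_simp
    linear_combination hζ
  have h_pos := theta_of_pow_four_eq_neg_one hζ hq₀ hq
  have h_neg := theta_of_pow_four_eq_neg_one hζ (neg_ne_zero.mpr hq₀) (by rwa [norm_neg])
  have even_pow (n : ℕ) : (-q) ^ (2 * n) = q ^ (2 * n) := by rw [pow_mul, neg_sq, ← pow_mul]
  rw [even_pow 8, even_pow 4] at h_neg
  have ratio : (theta ζ q - theta ζ (-q)) / (theta ζ q + theta ζ (-q)) =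
      (ζ + ζ⁻¹) * q * (theta (-q ^ 8) (q ^ 16) / theta (-1) (q ^ 16)) := by
    rw [h_pos, h_neg]
    ring_nf
  rw [ratio, one_sub_theta_quotient_pow_four (pow_ne_zero 8 hq₀) hq₈ (by rwa [← pow_mul]),
    ← pow_mul, mul_pow, mul_pow, pow_mul _ 2 4, hζ_add_inv]
  norm_num

end Theta

/-- The infinite `q`-Pochhammer symbol `(a; q)_∞`. -/
noncomputable def qPochhammerInf (a q : ℂ) : ℂ := ∏' n : ℕ, (1 - a * q ^ n)

/-- The reciprocal of the `q`-factorial `(q; q)_n`, extended by zero to negative `n` so that its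
recurrence holds on all of `ℤ`. -/
noncomputable def invQFactorial (q : ℂ) (n : ℤ) : ℂ :=
  if n < 0 then 0 else (∏ i ∈ Finset.range n.toNat, (1 - q * q ^ i))⁻¹

/-- The coefficient of `z ^ k` in the finite form of the Jacobi triple product: `q^{k²}` times the
Gaussian binomial coefficient `[2N; N + k]` at base `q²`, divided by `(q²; q²)_{2N}`. -/
noncomputable def tripleProductCoeff (q : ℂ) (N : ℕ) (k : ℤ) : ℂ :=
  invQFactorial (q ^ 2) (N + k) * invQFactorial (q ^ 2) (N - k) * q ^ (k ^ 2)

section TripleProduct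

open Complex Topology

variable {a q z : ℂ}

lemma summable_norm_mul_pow (a : ℂ) (hq : ‖q‖ < 1) : Summable fun n : ℕ ↦ ‖-(a * q ^ n)‖ := by
  simpa using (summable_geometric_of_lt_one (norm_nonneg q) hq).mul_left ‖a‖

lemma hasProd_qPochhammerInf (a : ℂ) (hq : ‖q‖ < 1) :
    HasProd (fun n : ℕ ↦ 1 - a * q ^ n) (qPochhammerInf a q) := by
  simpa only [sub_eq_add_neg, qPochhammerInf] using
    (multipliable_one_add_of_summable (summable_norm_mul_pow a hq)).hasProd

lemma one_sub_mul_pow_ne_zero (ha : ‖a‖ < 1) (hq : ‖q‖ < 1) (n : ℕ) : 1 - a * q ^ n ≠ 0 := by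
  refine sub_ne_zero.mpr fun h ↦ ?_
  have : ‖a * q ^ n‖ < 1 := by
    rw [norm_mul, norm_pow]
    exact mul_lt_one_of_nonneg_of_lt_one_left (norm_nonneg a) ha
      (pow_le_one₀ (norm_nonneg q) hq.le)
  rw [← h, norm_one] at this
  exact this.false

lemma qPochhammerInf_ne_zero (ha : ‖a‖ < 1) (hq : ‖q‖ < 1) : qPochhammerInf a q ≠ 0 :=
  tprod_one_add_ne_zero_of_summable (one_sub_mul_pow_ne_zero ha hq) (summable_norm_mul_pow a hq)

lemma invQFactorial_natCast (q : ℂ) (n : ℕ) :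
    invQFactorial q n = (∏ i ∈ Finset.range n, (1 - q * q ^ i))⁻¹ := by
  simp [invQFactorial]

lemma invQFactorial_of_neg (q : ℂ) {n : ℤ} (hn : n < 0) : invQFactorial q n = 0 :=
  if_pos hn

lemma invQFactorial_sub_one (hq : ‖q‖ < 1) (n : ℤ) :
    invQFactorial q (n - 1) = (1 - q ^ n) * invQFactorial q n := by
  rcases lt_trichotomy n 0 with hn | rfl | hn
  · rw [invQFactorial_of_neg q hn, invQFactorial_of_neg q (by omega), mul_zero]
  · rw [invQFactorial_of_neg q (by omega), zpow_zero, sub_self, zero_mul]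
  · obtain ⟨m, rfl⟩ := Int.eq_succ_of_zero_lt hn
    have hm := one_sub_mul_pow_ne_zero hq hq m
    rw [Int.add_sub_cancel, ← Nat.cast_succ, zpow_natCast, invQFactorial_natCast,
      invQFactorial_natCast, Finset.prod_range_succ, pow_succ']
    field_simp

lemma tendsto_invQFactorial (hq : ‖q‖ < 1) :
    Tendsto (invQFactorial q) atTop (𝓝 (qPochhammerInf q q)⁻¹) := by
  rw [← Nat.map_cast_int_atTop, tendsto_map'_iff]
  refine (((hasProd_qPochhammerInf q hq).tendsto_prod_nat).inv₀
    (qPochhammerInf_ne_zero hq hq)).congr fun n ↦ ?_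
  exact (invQFactorial_natCast q n).symm

lemma exists_norm_invQFactorial_le (hq : ‖q‖ < 1) :
    ∃ C, ∀ n, ‖invQFactorial q n‖ ≤ C := by
  have bounded := Metric.isBounded_range_of_tendsto _
    ((tendsto_invQFactorial hq).comp tendsto_natCast_atTop_atTop)
  obtain ⟨C, hC⟩ := bounded.exists_norm_le
  refine ⟨C, fun n ↦ ?_⟩
  rcases lt_or_ge n 0 with hn | hn
  · rw [invQFactorial_of_neg q hn, norm_zero]
    exact (norm_nonneg _).trans (hC _ ⟨0, rfl⟩)
  · lift n to ℕ using hn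
    exact hC _ ⟨n, rfl⟩

lemma tripleProductCoeff_succ (hq₀ : q ≠ 0) (hq : ‖q‖ < 1) (N : ℕ) (k : ℤ) :
    (1 - q ^ (4 * N + 2)) * (1 - q ^ (4 * N + 4)) * tripleProductCoeff q (N + 1) k =
      (1 + q ^ (4 * N + 2)) * tripleProductCoeff q N k +
        q ^ (2 * N + 1) * tripleProductCoeff q N (k - 1) +
        q ^ (2 * N + 1) * tripleProductCoeff q N (k + 1) := by
  have hq₂ : ‖q ^ 2‖ < 1 := norm_pow_lt_one_of_norm_lt_one hq two_ne_zero
  have sq_zpow (n : ℤ) : (q ^ 2) ^ n = (q ^ n) ^ 2 := by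
    rw [← zpow_natCast, ← zpow_natCast, zpow_comm]
  have zpow_sub_one_sq : q ^ ((k - 1) ^ 2) = q ^ (k ^ 2) * q / (q ^ k) ^ 2 := by
    rw [show (k - 1) ^ 2 = k ^ 2 + 1 - k * 2 by ring, zpow_sub₀ hq₀, zpow_add_one₀ hq₀, zpow_mul]
    rfl
  have zpow_add_one_sq : q ^ ((k + 1) ^ 2) = q ^ (k ^ 2) * q * (q ^ k) ^ 2 := by
    rw [show (k + 1) ^ 2 = k ^ 2 + 1 + k * 2 by ring, zpow_add₀ hq₀, zpow_add_one₀ hq₀, zpow_mul]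
    rfl
  have hqk : q ^ k ≠ 0 := zpow_ne_zero k hq₀
  simp only [tripleProductCoeff, Nat.cast_succ]
  rw [show (N : ℤ) + (k - 1) = N + k - 1 by ring, show (N : ℤ) - (k + 1) = N - k - 1 by ring,
    invQFactorial_sub_one hq₂ (N + k), invQFactorial_sub_one hq₂ (N - k),
    show (N : ℤ) + k = N + 1 + k - 1 by ring, show (N : ℤ) - k = N + 1 - k - 1 by ring,
    show (N : ℤ) + (k + 1) = N + 1 + k by ring, show (N : ℤ) - (k - 1) = N + 1 - k by ring,
    invQFactorial_sub_one hq₂ (N + 1 + k), invQFactorial_sub_one hq₂ (N + 1 - k)]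
  simp only [sq_zpow, zpow_sub_one_sq, zpow_add_one_sq, zpow_sub₀ hq₀, zpow_add₀ hq₀, zpow_natCast,
    zpow_one]
  generalize q ^ k = y at hqk
  field_simp
  ring

lemma invQFactorial_two_mul (hq : ‖q‖ < 1) (N : ℕ) :
    invQFactorial (q ^ 2) (2 * N) =
      (1 - q ^ (4 * N + 2)) * (1 - q ^ (4 * N + 4)) *
        invQFactorial (q ^ 2) (2 * (N + 1 : ℕ)) := by
  have hq₂ : ‖q ^ 2‖ < 1 := norm_pow_lt_one_of_norm_lt_one hq two_ne_zero
  have h_odd := invQFactorial_sub_one hq₂ (2 * N + 1 : ℕ)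
  have h_even := invQFactorial_sub_one hq₂ (2 * N + 2 : ℕ)
  rw [zpow_natCast, ← pow_mul] at h_odd h_even
  rw [show (2 * N : ℤ) = (2 * N + 1 : ℕ) - 1 by push_cast; ring, h_odd,
    show ((2 * N + 1 : ℕ) : ℤ) = (2 * N + 2 : ℕ) - 1 by push_cast; ring, h_even]
  push_cast
  ring_nf

lemma hasSum_shift_mul_zpow {c : ℤ → ℂ} {s : ℂ} (hz : z ≠ 0)
    (h : HasSum (fun k ↦ c k * z ^ k) s) (m : ℤ) :
    HasSum (fun k ↦ c (k - m) * z ^ k) (z ^ m * s) := by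
  refine ((Equiv.subRight m).hasSum_iff.mpr (h.mul_left (z ^ m))).congr_fun fun k ↦ ?_
  have : z ^ k = z ^ m * z ^ (k - m) := by rw [← zpow_add₀ hz, add_sub_cancel]
  simp only [Function.comp_apply, Equiv.subRight_apply, this]
  ring

lemma hasSum_tripleProductCoeff (hz : z ≠ 0) (hq₀ : q ≠ 0) (hq : ‖q‖ < 1) (N : ℕ) :
    HasSum (fun k : ℤ ↦ tripleProductCoeff q N k * z ^ k)
      (invQFactorial (q ^ 2) (2 * N) *
        ∏ j ∈ Finset.range N, ((1 + z * q ^ (2 * j + 1)) * (1 + z⁻¹ * q ^ (2 * j + 1)))) := by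
  have hq₂ : ‖q ^ 2‖ < 1 := norm_pow_lt_one_of_norm_lt_one hq two_ne_zero
  induction N with
  | zero =>
    convert hasSum_single (f := fun k : ℤ ↦ tripleProductCoeff q 0 k * z ^ k) 0 ?_ using 1
    · simp [tripleProductCoeff, invQFactorial]
    · intro k hk
      rcases lt_or_gt_of_ne hk with hk | hk <;> simp [tripleProductCoeff, invQFactorial, hk]
  | succ N ih =>
    set S := invQFactorial (q ^ 2) (2 * N) * ∏ j ∈ Finset.range N, _ with hS
    have shift_right := hasSum_shift_mul_zpow hz ih 1
    have shift_left := hasSum_shift_mul_zpow hz ih (-1)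
    simp only [sub_neg_eq_add, zpow_neg, zpow_one] at shift_right shift_left
    have h₁ : 1 - q ^ (4 * N + 2) ≠ 0 := by
      convert one_sub_mul_pow_ne_zero hq₂ hq₂ (2 * N) using 2; ring
    have h₂ : 1 - q ^ (4 * N + 4) ≠ 0 := by
      convert one_sub_mul_pow_ne_zero hq₂ hq₂ (2 * N + 1) using 2; ring
    have product_rec : (1 - q ^ (4 * N + 2)) * (1 - q ^ (4 * N + 4)) *
        (invQFactorial (q ^ 2) (2 * (N + 1 : ℕ)) * ∏ j ∈ Finset.range (N + 1),
          ((1 + z * q ^ (2 * j + 1)) * (1 + z⁻¹ * q ^ (2 * j + 1)))) =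
        (1 + q ^ (4 * N + 2)) * S + q ^ (2 * N + 1) * (z * S) + q ^ (2 * N + 1) * (z⁻¹ * S) := by
      rw [hS, invQFactorial_two_mul hq N, Finset.prod_range_succ]
      generalize (∏ j ∈ Finset.range N, _ : ℂ) = P
      field_simp
      ring
    rw [← hasSum_mul_left_iff (mul_ne_zero h₁ h₂), product_rec]
    refine (((ih.mul_left _).add (shift_right.mul_left _)).add (shift_left.mul_left _)).congr_fun
      fun k ↦ ?_
    linear_combination z ^ k * tripleProductCoeff_succ hq₀ hq N k

lemma tendsto_tsum_tripleProductCoeff (hz : z ≠ 0) (hq₀ : q ≠ 0) (hq : ‖q‖ < 1) :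
    Tendsto (fun N : ℕ ↦ ∑' k : ℤ, tripleProductCoeff q N k * z ^ k) atTop
      (𝓝 ((qPochhammerInf (q ^ 2) (q ^ 2))⁻¹ ^ 2 * theta z q)) := by
  have hq₂ : ‖q ^ 2‖ < 1 := norm_pow_lt_one_of_norm_lt_one hq two_ne_zero
  obtain ⟨C, hC⟩ := exists_norm_invQFactorial_le hq₂
  have hC₀ : 0 ≤ C := (norm_nonneg _).trans (hC 0)
  rw [theta, ← tsum_mul_left]
  refine tendsto_tsum_of_dominated_convergence
    (bound := fun k : ℤ ↦ C * C * ‖z ^ k * q ^ (k ^ 2)‖)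
    ((summable_theta hz hq₀ hq).norm.mul_left _) (fun k ↦ ?_) (.of_forall fun N k ↦ ?_)
  · have cast_add_const (m : ℤ) : Tendsto (fun N : ℕ ↦ (N : ℤ) + m) atTop atTop :=
      tendsto_atTop_add_const_right _ _ tendsto_natCast_atTop_atTop
    have h_lim := ((tendsto_invQFactorial hq₂).comp (cast_add_const k)).mul
      ((tendsto_invQFactorial hq₂).comp (cast_add_const (-k)))
    rw [← sq] at h_lim
    refine (h_lim.mul_const (z ^ k * q ^ (k ^ 2))).congr fun N ↦ ?_
    simp only [tripleProductCoeff, Function.comp_apply, sub_eq_add_neg]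
    ring
  · calc ‖tripleProductCoeff q N k * z ^ k‖
        = ‖invQFactorial (q ^ 2) (N + k)‖ * ‖invQFactorial (q ^ 2) (N - k)‖ *
            ‖z ^ k * q ^ (k ^ 2)‖ := by
          rw [tripleProductCoeff, ← norm_mul, ← norm_mul]
          ring_nf
      _ ≤ C * C * ‖z ^ k * q ^ (k ^ 2)‖ := by gcongr <;> exact hC _

lemma theta_eq_qPochhammerInf (hz : z ≠ 0) (hq₀ : q ≠ 0) (hq : ‖q‖ < 1) :
    theta z q = qPochhammerInf (q ^ 2) (q ^ 2) * qPochhammerInf (-(z * q)) (q ^ 2) *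
      qPochhammerInf (-(z⁻¹ * q)) (q ^ 2) := by
  have hq₂ : ‖q ^ 2‖ < 1 := norm_pow_lt_one_of_norm_lt_one hq two_ne_zero
  have euler_ne_zero := qPochhammerInf_ne_zero hq₂ hq₂
  have cast_two_mul : Tendsto (fun N : ℕ ↦ (2 * N : ℤ)) atTop atTop :=
    tendsto_natCast_atTop_atTop.const_mul_atTop' two_pos
  have product_lim := ((tendsto_invQFactorial hq₂).comp cast_two_mul).mul
    ((hasProd_qPochhammerInf (-(z * q)) hq₂).mul
      (hasProd_qPochhammerInf (-(z⁻¹ * q)) hq₂)).tendsto_prod_nat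
  have h := tendsto_nhds_unique (tendsto_tsum_tripleProductCoeff hz hq₀ hq)
    (product_lim.congr fun N ↦ ?_)
  · rw [inv_pow, inv_mul_eq_iff_eq_mul₀ (pow_ne_zero 2 euler_ne_zero)] at h
    rw [h, sq, mul_assoc, mul_inv_cancel_left₀ euler_ne_zero, mul_assoc]
  · rw [(hasSum_tripleProductCoeff hz hq₀ hq N).tsum_eq]
    simp only [Function.comp_apply, neg_mul, sub_neg_eq_add, mul_assoc, ← pow_mul, ← pow_succ']

lemma theta_ne_zero_of_norm_eq_one (hz : ‖z‖ = 1) (hq₀ : q ≠ 0) (hq : ‖q‖ < 1) :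
    theta z q ≠ 0 := by
  have hz₀ : z ≠ 0 := norm_ne_zero_iff.mp (hz ▸ one_ne_zero)
  have hq₂ : ‖q ^ 2‖ < 1 := norm_pow_lt_one_of_norm_lt_one hq two_ne_zero
  rw [theta_eq_qPochhammerInf hz₀ hq₀ hq]
  refine mul_ne_zero (mul_ne_zero ?_ ?_) ?_ <;>
  exact qPochhammerInf_ne_zero (by simpa [hz] using hq) hq₂

end TripleProduct

section ThetaQuotient

open Complex
open scoped ComplexConjugate

variable {a q ζ : ℂ}

lemma conj_qPochhammerInf (a : ℂ) (hq : ‖q‖ < 1) :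
    conj (qPochhammerInf a q) = qPochhammerInf (conj a) (conj q) := by
  rw [qPochhammerInf,
    (hasProd_qPochhammerInf a hq).multipliable.map_tprod (starRingEnd ℂ) continuous_conj]
  simp only [map_sub, map_one, map_mul, map_pow, qPochhammerInf]

lemma theta_eq_mul_norm_sq (hζ : ‖ζ‖ = 1) {r : ℝ} (hr₀ : r ≠ 0) (hr : ‖(r : ℂ)‖ < 1) :
    theta ζ r = qPochhammerInf (r ^ 2) (r ^ 2) *
      (‖qPochhammerInf (-(ζ * r)) (r ^ 2)‖ : ℂ) ^ 2 := by
  have hζ₀ : ζ ≠ 0 := norm_ne_zero_iff.mp (hζ ▸ one_ne_zero)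
  have hr₂ : ‖(r : ℂ) ^ 2‖ < 1 := norm_pow_lt_one_of_norm_lt_one hr two_ne_zero
  rw [theta_eq_qPochhammerInf hζ₀ (ofReal_ne_zero.mpr hr₀) hr, mul_assoc, ← mul_conj',
    conj_qPochhammerInf _ hr₂, inv_eq_conj hζ]
  simp only [map_neg, map_mul, map_pow, conj_ofReal]

lemma norm_qPochhammerInf_eq_exp_mul {s : ℝ} (ha : ‖a‖ < 1) (hq : ‖q‖ < 1)
    (h : HasSum (fun n : ℕ ↦ Real.log (‖1 - a * q ^ n‖ / ‖1 + a * q ^ n‖)) s) :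
    ‖qPochhammerInf a q‖ = Real.exp s * ‖qPochhammerInf (-a) q‖ := by
  have h_mul := h.rexp.mul (hasProd_qPochhammerInf (-a) hq).norm
  refine (hasProd_qPochhammerInf a hq).norm.unique (h_mul.congr_fun fun n ↦ ?_)
  have num_pos : 0 < ‖1 - a * q ^ n‖ := norm_pos_iff.mpr (one_sub_mul_pow_ne_zero ha hq n)
  have den_pos : 0 < ‖1 + a * q ^ n‖ := by
    simpa using one_sub_mul_pow_ne_zero (a := -a) (by rwa [norm_neg]) hq n
  rw [Function.comp_apply, Real.exp_log (div_pos num_pos den_pos), neg_mul, sub_neg_eq_add,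
    div_mul_cancel₀ _ den_pos.ne']

lemma theta_neg_eq_exp_mul_theta {r s : ℝ} (hζ : ‖ζ‖ = 1) (hr₀ : r ≠ 0) (hr : ‖(r : ℂ)‖ < 1)
    (h : HasSum (fun j : ℕ ↦
      Real.log (‖1 - ζ * r ^ (2 * j + 1)‖ / ‖1 + ζ * r ^ (2 * j + 1)‖)) s) :
    theta ζ (-r) = Real.exp (2 * s) * theta ζ r := by
  have hr₂ : ‖(r : ℂ) ^ 2‖ < 1 := norm_pow_lt_one_of_norm_lt_one hr two_ne_zero
  have h_ratio := norm_qPochhammerInf_eq_exp_mul (a := ζ * r) (q := r ^ 2) (s := s)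
    (by simpa [hζ] using hr) hr₂ (by simpa only [mul_assoc, ← pow_mul, ← pow_succ'] using h)
  rw [← ofReal_neg, theta_eq_mul_norm_sq hζ (neg_ne_zero.mpr hr₀) (by simpa using hr),
    theta_eq_mul_norm_sq hζ hr₀ hr, ofReal_neg, neg_sq, mul_neg, neg_neg, h_ratio,
    two_mul, Real.exp_add]
  push_cast
  ring

lemma norm_one_sub_le_norm_one_add {w : ℂ} (hw : 0 ≤ w.re) : ‖1 - w‖ ≤ ‖1 + w‖ := by
  rw [← sq_le_sq₀ (norm_nonneg _) (norm_nonneg _), ← normSq_eq_norm_sq, ← normSq_eq_norm_sq,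
    normSq_sub, normSq_add]
  simp only [one_mul, conj_re]
  linarith

lemma ofReal_phi (r : ℝ) : (phi r : ℂ) = theta 1 r := by
  simp [phi, theta, ofReal_tsum]

lemma norm_eq_one_of_pow_four_eq_neg_one (hζ : ζ ^ 4 = -1) : ‖ζ‖ = 1 := by
  rw [← pow_eq_one_iff_of_nonneg (norm_nonneg ζ) four_ne_zero, ← norm_pow, hζ, norm_neg, norm_one]

lemma exp_quotient_pow_eight {q s : ℝ} (hζ : ζ ^ 4 = -1) (hq₀ : q ≠ 0) (hq : ‖(q : ℂ)‖ < 1)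
    (h : HasSum (fun j : ℕ ↦
      Real.log (‖1 - ζ * q ^ (2 * j + 1)‖ / ‖1 + ζ * q ^ (2 * j + 1)‖)) s) :
    ((1 - Real.exp (2 * s)) / (1 + Real.exp (2 * s))) ^ 8 =
      1 - phi (-(q ^ 8)) ^ 4 / phi (q ^ 8) ^ 4 := by
  have hζ_norm := norm_eq_one_of_pow_four_eq_neg_one hζ
  have hq_ne : (q : ℂ) ≠ 0 := ofReal_ne_zero.mpr hq₀
  have hq_pow : ‖(q : ℂ) ^ 16‖ < 1 :=
    norm_pow_lt_one_of_norm_lt_one hq (by norm_num)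
  have h_ratio := theta_ratio_pow_eight hζ hq_ne hq
    (theta_ne_zero_of_norm_eq_one (by simp) (pow_ne_zero 16 hq_ne) hq_pow)
  rw [theta_neg_eq_exp_mul_theta hζ_norm hq₀ hq h, ← one_sub_mul, ← one_add_mul,
    mul_div_mul_right _ _ (theta_ne_zero_of_norm_eq_one hζ_norm hq_ne hq),
    ← theta_neg_right] at h_ratio
  rw [← ofReal_inj]
  simpa only [ofReal_pow, ofReal_sub, ofReal_div, ofReal_one, ofReal_add, ofReal_phi, ofReal_neg]
    using h_ratio

lemma log_one_sub_div_one_add_phi_quotient_rpow {q s : ℝ} (hζ : ζ ^ 4 = -1) (hζ_re : 0 ≤ ζ.re)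
    (hq₀ : 0 < q) (hq : q < 1)
    (h : HasSum (fun j : ℕ ↦
      Real.log (‖1 - ζ * q ^ (2 * j + 1)‖ / ‖1 + ζ * q ^ (2 * j + 1)‖)) s) {α : ℝ}
    (hα : α = 1 - phi (-(q ^ 8)) ^ 4 / phi (q ^ 8) ^ 4) :
    Real.log ((1 - α ^ ((1 : ℝ) / 8)) / (1 + α ^ ((1 : ℝ) / 8))) = 2 * s := by
  have hq_norm : ‖(q : ℂ)‖ < 1 := by rwa [norm_real, Real.norm_of_nonneg hq₀.le]
  have factor_le_one (j : ℕ) : ‖1 - ζ * q ^ (2 * j + 1)‖ ≤ ‖1 + ζ * q ^ (2 * j + 1)‖ := by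
    apply norm_one_sub_le_norm_one_add
    rw [← ofReal_pow, re_mul_ofReal]
    positivity
  have hs : s ≤ 0 := h.nonpos fun j ↦ Real.log_nonpos (by positivity)
    (div_le_one_of_le₀ (factor_le_one j) (norm_nonneg _))
  have exp_le_one : Real.exp (2 * s) ≤ 1 := Real.exp_le_one_iff.mpr (by linarith)
  have h_root : α ^ ((1 : ℝ) / 8) = (1 - Real.exp (2 * s)) / (1 + Real.exp (2 * s)) := by
    rw [hα, ← exp_quotient_pow_eight hζ hq₀.ne' hq_norm h, one_div]
    exact Real.pow_rpow_inv_natCast (div_nonneg (by linarith) (by positivity)) (by norm_num)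
  have h_exp : (1 - α ^ ((1 : ℝ) / 8)) / (1 + α ^ ((1 : ℝ) / 8)) = Real.exp (2 * s) := by
    rw [h_root]
    have : 1 + Real.exp (2 * s) ≠ 0 := by positivity
    field_simp
    ring
  rw [h_exp, Real.log_exp]

end ThetaQuotient

section PartialFractions

open Complex
open scoped Real

lemma hasSum_int_one_div_sq_sub_sq {x : ℂ} (hx : x ∈ integerComplement) :
    HasSum (fun m : ℤ ↦ 1 / (x ^ 2 - m ^ 2)) (π * cot (π * x) / x) := by
  have hx₀ : x ≠ 0 := integerComplement.ne_zero hx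
  have h_nat : HasSum (fun n : ℕ ↦ 1 / (x ^ 2 - (n + 1) ^ 2))
      ((π * cot (π * x) - 1 / x) / (2 * x)) := by
    have h := (summable_cotTerm hx).hasSum
    simp only [cotTerm] at h
    rw [← cot_series_rep' hx] at h
    refine (h.div_const (2 * x)).congr_fun fun n ↦ ?_
    rw [← cotTerm, cotTerm_identity hx, mul_div_cancel_left₀ _ (by simpa using hx₀)]
    ring
  have h_int := HasSum.of_add_one_of_neg_add_one (f := fun m : ℤ ↦ 1 / (x ^ 2 - (m : ℂ) ^ 2))
    (m' := (π * cot (π * x) - 1 / x) / (2 * x))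
    (by simpa using h_nat) (by simpa [← neg_add_rev, add_comm] using h_nat)
  convert! h_int using 1
  push_cast
  field_simp
  ring

lemma cot_sub_cot_two_mul {u : ℂ} (hu : sin (2 * u) ≠ 0) :
    cot u - cot (2 * u) = 1 / sin (2 * u) := by
  rw [sin_two_mul] at hu ⊢
  have h_sin : sin u ≠ 0 := fun h ↦ hu (by simp [h])
  have h_cos : cos u ≠ 0 := fun h ↦ hu (by simp [h])
  rw [cot, cot, sin_two_mul, cos_two_mul]
  field_simp
  ring

lemma hasSum_int_neg_one_zpow_mul_one_div_sq_sub_sq {x : ℂ} (hx : x ∈ integerComplement) :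
    HasSum (fun m : ℤ ↦ (-1) ^ m * (1 / (x ^ 2 - m ^ 2))) (π / (x * sin (π * x))) := by
  have hx_half : x / 2 ∈ integerComplement := by
    rw [mem_integerComplement_iff] at hx ⊢
    rintro ⟨n, hn⟩
    exact hx ⟨2 * n, by push_cast; rw [hn]; ring⟩
  have h_even : HasSum (fun m : ℤ ↦ 1 / (x ^ 2 - ((2 * m : ℤ) : ℂ) ^ 2))
      (π * cot (π * (x / 2)) / (x / 2) / 4) := by
    refine ((hasSum_int_one_div_sq_sub_sq hx_half).div_const 4).congr_fun fun m ↦ ?_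
    push_cast
    rw [div_div]
    ring_nf
  convert! hasSum_neg_one_zpow_mul (hasSum_int_one_div_sq_sub_sq hx) h_even using 1
  have h_double : (π : ℂ) * x = 2 * (π * (x / 2)) := by ring
  have h_cot := cot_sub_cot_two_mul (u := π * (x / 2)) (by
    rw [← h_double]
    exact sin_pi_mul_ne_zero hx)
  rw [← h_double] at h_cot
  rw [← div_div, div_eq_mul_one_div _ (sin _), ← h_cot]
  ring

lemma hasSum_int_neg_one_zpow_div_sq_add_sq {y : ℝ} (hy : y ≠ 0) :
    HasSum (fun m : ℤ ↦ (-1) ^ m / ((m : ℝ) ^ 2 + y ^ 2)) (π / (y * Real.sinh (π * y))) := by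
  have hyI : y * I ∈ integerComplement := by
    rw [mem_integerComplement_iff]
    rintro ⟨n, hn⟩
    exact hy (by simpa using (congrArg im hn).symm)
  have h_val : ((π / (y * Real.sinh (π * y)) : ℝ) : ℂ) =
      -(π / (y * I * sin (π * (y * I)))) := by
    rw [← mul_assoc (π : ℂ), sin_mul_I, mul_mul_mul_comm, I_mul_I, mul_neg_one, div_neg, neg_neg]
    push_cast
    rfl
  rw [← hasSum_ofReal, h_val]
  refine (hasSum_int_neg_one_zpow_mul_one_div_sq_sub_sq hyI).neg.congr_fun fun m ↦ ?_
  push_cast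
  rw [mul_pow, I_sq, mul_one_div, ← div_neg]
  ring

end PartialFractions

section LogSeries

open Complex

variable {w ζ : ℂ}

lemma hasSum_log_one_add_sub_log_one_sub (hw : ‖w‖ < 1) :
    HasSum (fun n : ℕ ↦ (1 - (-1) ^ n) * (w ^ n / n)) (log (1 + w) - log (1 - w)) := by
  have h := (hasSum_taylorSeries_log hw).add (hasSum_taylorSeries_neg_log hw)
  rw [← sub_eq_add_neg] at h
  refine h.congr_fun fun n ↦ ?_
  ring

lemma injective_natAbs_four_mul_add_one : Function.Injective fun n : ℤ ↦ (4 * n + 1).natAbs := by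
  intro m n h
  simp only at h
  omega

lemma hasSum_pow_natAbs_four_mul_add_one_div (hw : ‖w‖ < 1) :
    HasSum (fun n : ℤ ↦ w ^ (4 * n + 1).natAbs / (4 * n + 1).natAbs)
      ((log (1 + w) - log (1 - w)) / 2) := by
  have even_of_notMem_range {n : ℕ} (hn : n ∉ Set.range fun k : ℤ ↦ (4 * k + 1).natAbs) :
      Even n := by
    by_contra h_odd
    rw [Nat.not_even_iff] at h_odd
    obtain h | h : n % 4 = 1 ∨ n % 4 = 3 := by omega
    · exact hn ⟨n / 4, by dsimp only; omega⟩
    · exact hn ⟨-(n / 4) - 1, by dsimp only; omega⟩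
  have h := (injective_natAbs_four_mul_add_one.hasSum_iff fun n hn ↦ by
    rw [(even_of_notMem_range hn).neg_one_pow, sub_self, zero_mul]).mpr
      (hasSum_log_one_add_sub_log_one_sub hw)
  refine (h.div_const 2).congr_fun fun n ↦ ?_
  have h_odd : Odd (4 * n + 1).natAbs := by
    rw [Int.natAbs_odd]
    exact ⟨2 * n, by ring⟩
  rw [Function.comp_apply, h_odd.neg_one_pow]
  ring

lemma re_pow_natAbs_four_mul_add_one (hζ : ζ ^ 4 = -1) (n : ℤ) :
    (ζ ^ (4 * n + 1).natAbs).re = (-1) ^ n * ζ.re := by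
  have hζ_norm := norm_eq_one_of_pow_four_eq_neg_one hζ
  have hζ₀ : ζ ≠ 0 := norm_ne_zero_iff.mp (hζ_norm ▸ one_ne_zero)
  have h_zpow : ζ ^ (4 * n + 1) = ((-1) ^ n : ℝ) * ζ := by
    rw [zpow_add_one₀ hζ₀, zpow_mul, zpow_ofNat, hζ]
    push_cast
    rfl
  have h_re : (ζ ^ (4 * n + 1)).re = (-1) ^ n * ζ.re := by rw [h_zpow, re_ofReal_mul]
  obtain h | h := Int.natAbs_eq (4 * n + 1)
  · rw [← h_re, h, zpow_natCast, ← h]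
  · rw [← h_re, h, zpow_neg, zpow_natCast, ← h, inv_eq_conj (by rw [norm_pow, hζ_norm, one_pow]),
      conj_re]

lemma hasSum_neg_one_zpow_mul_pow_natAbs_div {t : ℝ} (hζ : ζ ^ 4 = -1) (ht : |t| < 1) :
    HasSum (fun n : ℤ ↦ ζ.re * ((-1) ^ n * t ^ (4 * n + 1).natAbs / (4 * n + 1).natAbs))
      (-(Real.log (‖1 - ζ * t‖ / ‖1 + ζ * t‖) / 2)) := by
  have hw : ‖ζ * t‖ < 1 := by
    rwa [norm_mul, norm_eq_one_of_pow_four_eq_neg_one hζ, one_mul, norm_real]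
  have num_ne_zero : ‖1 - ζ * t‖ ≠ 0 := by
    simpa using one_sub_mul_pow_ne_zero hw hw 0
  have den_ne_zero : ‖1 + ζ * t‖ ≠ 0 := by
    simpa using one_sub_mul_pow_ne_zero (a := -(ζ * t)) (by rwa [norm_neg]) hw 0
  have h := hasSum_re (hasSum_pow_natAbs_four_mul_add_one_div hw)
  have h_val : ((log (1 + ζ * t) - log (1 - ζ * t)) / 2).re =
      -(Real.log (‖1 - ζ * t‖ / ‖1 + ζ * t‖) / 2) := by
    rw [Real.log_div num_ne_zero den_ne_zero, div_ofNat_re, sub_re, log_re, log_re]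
    ring
  rw [h_val] at h
  refine h.congr_fun fun n ↦ ?_
  rw [div_natCast_re, mul_pow, ← ofReal_pow, re_mul_ofReal, re_pow_natAbs_four_mul_add_one hζ]
  ring

end LogSeries

/-- The terms of the double series `∑ (-1)ⁿ q^{(2j+1)|4n+1|} / |4n+1|` over `(n, j)`: summing over
`j` first gives the lattice sum, summing over `n` first gives the logarithm of a theta quotient. -/
noncomputable def lambertTerm (q : ℝ) (p : ℤ × ℕ) : ℝ :=
  (-1) ^ p.1 * (q ^ (2 * p.2 + 1)) ^ (4 * p.1 + 1).natAbs / (4 * p.1 + 1).natAbs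

section DoubleSeries

open scoped Real

variable {q x : ℝ}

lemma summable_pow_natAbs (hq : |q| < 1) : Summable fun n : ℤ ↦ q ^ n.natAbs := by
  apply Summable.of_nat_of_neg <;> simpa using hq

lemma summable_lambertTerm (hq : |q| < 1) : Summable (lambertTerm q) := by
  have h_geom : Summable fun p : ℤ × ℕ ↦ |q| ^ p.1.natAbs * |q| ^ p.2 :=
    (summable_pow_natAbs (by rwa [abs_abs])).mul_of_nonneg
      (summable_geometric_of_lt_one (abs_nonneg q) hq) (fun n ↦ by positivity) fun j ↦ by positivity
  refine h_geom.of_norm_bounded fun ⟨n, j⟩ ↦ ?_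
  have h_natAbs : n.natAbs + 1 ≤ (4 * n + 1).natAbs := by omega
  have h_exponent : n.natAbs + j ≤ (2 * j + 1) * (4 * n + 1).natAbs :=
    calc n.natAbs + j ≤ (2 * j + 1) * (n.natAbs + 1) := by nlinarith [Nat.zero_le (j * n.natAbs)]
      _ ≤ _ := Nat.mul_le_mul_left _ h_natAbs
  calc ‖lambertTerm q (n, j)‖
      = |q| ^ ((2 * j + 1) * (4 * n + 1).natAbs) / (4 * n + 1).natAbs := by
        simp [lambertTerm, pow_mul]
    _ ≤ |q| ^ ((2 * j + 1) * (4 * n + 1).natAbs) :=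
        div_le_self (by positivity) (by exact_mod_cast (Nat.le_add_left 1 _).trans h_natAbs)
    _ ≤ |q| ^ (n.natAbs + j) := pow_le_pow_of_le_one (abs_nonneg q) hq.le h_exponent
    _ = |q| ^ n.natAbs * |q| ^ j := pow_add _ _ _

lemma hasSum_exp_neg_pow_odd {u : ℝ} (hu : 0 < u) :
    HasSum (fun j : ℕ ↦ Real.exp (-u) ^ (2 * j + 1)) (1 / (2 * Real.sinh u)) := by
  have h_exp : Real.exp (-u) < 1 := Real.exp_lt_one_iff.mpr (neg_lt_zero.mpr hu)
  have h_sq : Real.exp (-u) ^ 2 < 1 := pow_lt_one₀ (Real.exp_pos _).le h_exp two_ne_zero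
  have h_val : 1 / (2 * Real.sinh u) = Real.exp (-u) * (1 - Real.exp (-u) ^ 2)⁻¹ := by
    rw [Real.sinh_eq, mul_div_cancel₀ _ two_ne_zero, ← neg_neg u, Real.exp_neg (-u), neg_neg]
    field_simp
  rw [h_val]
  refine ((hasSum_geometric_of_lt_one (sq_nonneg _) h_sq).mul_left _).congr_fun fun j ↦ ?_
  ring

lemma tsum_neg_one_zpow_div_eq_tsum_lambertTerm (hx : 0 < x) (n : ℤ) :
    ∑' m : ℤ, (-1 : ℝ) ^ (m + n) / ((x * m) ^ 2 + (4 * (n : ℝ) + 1) ^ 2) =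
      2 * π / x * ∑' j : ℕ, lambertTerm (Real.exp (-π / x)) (n, j) := by
  set A := (4 * n + 1).natAbs with hA
  have hA_pos : (0 : ℝ) < A := by exact_mod_cast (by omega : 0 < A)
  have hA_sq : (4 * (n : ℝ) + 1) ^ 2 = A ^ 2 := by
    rw [hA, Nat.cast_natAbs]
    push_cast
    rw [sq_abs]
  have h_lattice : HasSum (fun m : ℤ ↦ (-1 : ℝ) ^ (m + n) / ((x * m) ^ 2 + (4 * (n : ℝ) + 1) ^ 2))
      ((-1) ^ n / x ^ 2 * (π / (A / x * Real.sinh (π * (A / x))))) := by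
    refine ((hasSum_int_neg_one_zpow_div_sq_add_sq (by positivity)).mul_left _).congr_fun
      fun m ↦ ?_
    rw [hA_sq, zpow_add₀ (by norm_num), div_mul_div_comm]
    field_simp
  have h_lambert : HasSum (fun j : ℕ ↦ lambertTerm (Real.exp (-π / x)) (n, j))
      ((-1) ^ n / A * (1 / (2 * Real.sinh (π * (A / x))))) := by
    refine ((hasSum_exp_neg_pow_odd (by positivity)).mul_left _).congr_fun fun j ↦ ?_
    have h_exp : Real.exp (-(π * (A / x))) = Real.exp (-π / x) ^ A := by
      rw [← Real.exp_nat_mul]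
      ring_nf
    rw [h_exp, lambertTerm, ← hA]
    ring
  rw [h_lattice.tsum_eq, h_lambert.tsum_eq]
  field_simp

lemma exp_neg_pi_div_lt_one (hx : 0 < x) : Real.exp (-π / x) < 1 :=
  Real.exp_lt_one_iff.mpr (div_neg_of_neg_of_pos (neg_lt_zero.mpr Real.pi_pos) hx)

lemma hasSum_tsum_neg_one_zpow_div (hx : 0 < x) :
    HasSum (fun n : ℤ ↦ ∑' m : ℤ, (-1 : ℝ) ^ (m + n) / ((x * m) ^ 2 + (4 * (n : ℝ) + 1) ^ 2))
      (2 * π / x * ∑' p, lambertTerm (Real.exp (-π / x)) p) := by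
  have h := summable_lambertTerm ((Real.abs_exp _).trans_lt (exp_neg_pi_div_lt_one hx))
  refine ((h.hasSum.prod_fiberwise fun n ↦ (h.prod_factor n).hasSum).mul_left _).congr_fun
    fun n ↦ ?_
  exact tsum_neg_one_zpow_div_eq_tsum_lambertTerm hx n

lemma hasSum_log_norm_quotient {ζ : ℂ} (hζ : ζ ^ 4 = -1) (hq : |q| < 1) :
    HasSum (fun j : ℕ ↦ Real.log (‖1 - ζ * q ^ (2 * j + 1)‖ / ‖1 + ζ * q ^ (2 * j + 1)‖))
      (-(2 * ζ.re * ∑' p, lambertTerm q p)) := by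
  have h_swap := (Equiv.prodComm ℕ ℤ).hasSum_iff.mpr
    ((summable_lambertTerm hq).hasSum.mul_left ζ.re)
  have h_fiber := h_swap.prod_fiberwise fun j ↦
    hasSum_neg_one_zpow_mul_pow_natAbs_div (t := q ^ (2 * j + 1)) hζ
      (by simpa only [abs_pow] using pow_lt_one₀ (abs_nonneg q) hq (Nat.succ_ne_zero _))
  rw [mul_assoc, ← neg_mul]
  refine (h_fiber.mul_left (-2)).congr_fun fun j ↦ ?_
  push_cast
  ring

lemma exists_pow_four_eq_neg_one_re_eq : ∃ ζ : ℂ, ζ ^ 4 = -1 ∧ ζ.re = √2 / 2 := by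
  refine ⟨Complex.exp (↑(π / 4) * Complex.I), ?_, ?_⟩
  · rw [← Complex.exp_nat_mul, ← Complex.exp_pi_mul_I]
    push_cast
    ring_nf
  · rw [Complex.exp_ofReal_mul_I_re, Real.cos_pi_div_four]

end DoubleSeries

/-- For real `x > 0`, with `q = e^{-π/x}` and `α = 1 - φ⁴(-q⁸)/φ⁴(q⁸)`,
`F_{(4,1)}(x) = -(π/(√2 x)) log((1 - α^{1/8})/(1 + α^{1/8}))`,
with `α^{1/8}` the positive real eighth root. -/
theorem F41_evaluation (x : ℝ) (hx : 0 < x) (q α : ℝ)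
    (hq : q = Real.exp (-Real.pi / x))
    (hα : α = 1 - (phi (-(q ^ 8))) ^ 4 / (phi (q ^ 8)) ^ 4) :
    Tendsto (fun N : ℕ => ∑ n ∈ Finset.Ioo (-(N : ℤ)) (N : ℤ),
        ∑' m : ℤ, (-1 : ℝ) ^ (m + n) / ((x * m) ^ 2 + (4 * (n : ℝ) + 1) ^ 2))
      atTop
      (nhds (-(Real.pi / (Real.sqrt 2 * x)) *
        Real.log ((1 - α ^ ((1 : ℝ) / 8)) / (1 + α ^ ((1 : ℝ) / 8))))) := by
  have hq₀ : 0 < q := hq ▸ Real.exp_pos _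
  have hq₁ : q < 1 := hq ▸ exp_neg_pi_div_lt_one hx
  obtain ⟨ζ, hζ, hζ_re⟩ := exists_pow_four_eq_neg_one_re_eq
  have h_log := hasSum_log_norm_quotient hζ (by rwa [abs_of_pos hq₀])
  rw [log_one_sub_div_one_add_phi_quotient_rpow hζ (hζ_re ▸ by positivity) hq₀ hq₁ h_log hα, hζ_re]
  have h_value : -(Real.pi / (Real.sqrt 2 * x)) *
      (2 * -(2 * (Real.sqrt 2 / 2) * ∑' p, lambertTerm q p)) =
      2 * Real.pi / x * ∑' p, lambertTerm q p := by
    field_simp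
  rw [h_value, hq]
  exact (hasSum_tsum_neg_one_zpow_div hx).comp Finset.tendsto_Ioo_neg
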